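/- Let (X,d) be a generalized cone rectangular metric space with weight s ≥ 1 over a solid cone P in a real Banach space E, let T : X → X, and let φ : P → P be a weak distance altering function. Suppose μ, α, β, γ ≥ 0 are reals with μ + α + β < 1, μ < 1/s and μ + γ < 1, and φ(d(Tx,Ty)) ≤ μ·φ(d(x,y)) + α·φ(d(x,Tx)) + β·φ(d(y,Ty)) + γ·φ(d(y,Tx)) for all x, y ∈ X. Then for every x ∈ X, the sequence of iterates (Tⁿx) is a Cauchy sequence in X. -/

import Mathlib

open Set Filter

variable {E : Type*} [NormedAddCommGroup E] [NormedSpace ℝ E] [CompleteSpace E]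

/-- A cone in a real Banach space: a nonempty closed subset `P` with
`P + P ⊆ P`, `α • P ⊆ P` for all `α ≥ 0`, and `P ∩ (-P) = {0}`. -/
def IsCone (P : Set E) : Prop :=
  P.Nonempty ∧ IsClosed P ∧
  (∀ x ∈ P, ∀ y ∈ P, x + y ∈ P) ∧
  (∀ α : ℝ, 0 ≤ α → ∀ x ∈ P, α • x ∈ P) ∧
  P ∩ (-P) = {0}

/-- The partial order induced by the cone `P` : `x ≤ y` iff `y - x ∈ P`. -/
def ConeLe (P : Set E) (x y : E) : Prop := y - x ∈ P

/-- `x ≪ y` iff `y - x ∈ int P`. -/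
def ConeLt (P : Set E) (x y : E) : Prop := y - x ∈ interior P

/-- A weak distance altering function `φ` for the cone `P`
(given as a self-map of `E` mapping `P` into `P`):
(i) subadditive on `P`, (ii) `φ x ≤ φ y ↔ x ≤ y` on `P`,
(iii) `φ (η • x) ≥ η • φ x` for `0 ≤ η ≤ 1`,
(iv) it preserves the weak convergence to `0` of sequences in `P`. -/
def IsWeakDistanceAltering (P : Set E) (φ : E → E) : Prop :=
  (∀ a ∈ P, φ a ∈ P) ∧
  (∀ x ∈ P, ∀ y ∈ P, ConeLe P (φ (x + y)) (φ x + φ y)) ∧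
  (∀ x ∈ P, ∀ y ∈ P, (ConeLe P (φ x) (φ y) ↔ ConeLe P x y)) ∧
  (∀ x ∈ P, ∀ η : ℝ, 0 ≤ η → η ≤ 1 → ConeLe P (η • φ x) (φ (η • x))) ∧
  (∀ a : ℕ → E, (∀ n, a n ∈ P) →
    (∀ c : E, ConeLt P 0 c → ∃ N : ℕ, ∀ n ≥ N, ConeLt P (a n) c) →
    ∀ c : E, ConeLt P 0 c → ∃ M : ℕ, ∀ n ≥ M, ConeLt P (φ (a n)) c)

/-- A generalized cone rectangular metric on `X` with weight `s`:
`d x y ∈ P`, `d x y = 0 ↔ x = y`, and the rectangular inequality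
`d x y ≤ d x u + s • d u v + d v y` for distinct `u v ∈ X \ {x, y}`. -/
def IsGCRMetric {X : Type*} (P : Set E) (d : X → X → E) (s : ℕ) : Prop :=
  (∀ x y : X, d x y ∈ P) ∧
  (∀ x y : X, d x y = 0 ↔ x = y) ∧
  (∀ x y u v : X, u ≠ v → u ≠ x → u ≠ y → v ≠ x → v ≠ y →
    ConeLe P (d x y) (d x u + (s : ℝ) • d u v + d v y))

/-- A sequence is Cauchy for the generalized cone rectangular metric `d`. -/
def IsConeCauchy {X : Type*} (P : Set E) (d : X → X → E) (x : ℕ → X) : Prop :=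
  ∀ c : E, ConeLt P 0 c → ∃ N : ℕ, ∀ n ≥ N, ∀ k ≥ 1, ConeLt P (d (x n) (x (n + k))) c

/-- A sequence converges weakly to `l`. -/
def ConvergesWeaklyTo {X : Type*} (P : Set E) (d : X → X → E) (x : ℕ → X) (l : X) : Prop :=
  ∀ c : E, ConeLt P 0 c → ∃ N : ℕ, ∀ n ≥ N, ConeLt P (d (x n) l) c

/-- `(X, d)` is weakly complete: every Cauchy sequence converges weakly. -/
def WeaklyComplete {X : Type*} (P : Set E) (d : X → X → E) : Prop :=
  ∀ x : ℕ → X, IsConeCauchy P d x → ∃ l : X, ConvergesWeaklyTo P d x l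

/-!
Replacing `d` by the Minkowski-type gauge of `φ (d x y)` with respect to `φ b`, for `b` interior to
the cone, turns the problem into the case of the cone `[0, ∞)` in `ℝ`: `φ b` dominates every
`φ (d x y)` because `φ` is monotone and subadditive, and gauge at most `1` means `d x y ≤ b`.

For a real-valued `D`, the quantity `max (D y z) (D z (T y)) + K * max (D y (T y)) (D z (T z))` is
contracted by `T × T` with some ratio `r < 1` once `K` is large. Hence a periodic point is fixed,
and it remains to see that this potential is bounded on the pairs `(Tᵏ x, x)` of an injective orbit.
The rectangular inequality through `Tᵏ⁺ᵐ x` and `Tᵐ x` bounds the potential at `(Tᵏ x, x)` by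
a constant plus `s * r ^ m` times itself; `m` is chosen with `s * r ^ m ≤ 1 / 2`.
-/

section Cone

variable {F : Type*} [NormedAddCommGroup F] [NormedSpace ℝ F] {P : Set F} {a b c u v w e : F}

namespace IsCone

theorem add_mem (hP : IsCone P) (hu : u ∈ P) (hv : v ∈ P) : u + v ∈ P :=
  hP.2.2.1 u hu v hv

theorem smul_mem (hP : IsCone P) {t : ℝ} (ht : 0 ≤ t) (hu : u ∈ P) : t • u ∈ P :=
  hP.2.2.2.1 t ht u hu

theorem zero_mem (hP : IsCone P) : (0 : F) ∈ P := by
  obtain ⟨u, hu⟩ := hP.1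
  simpa only [zero_smul] using hP.smul_mem le_rfl hu

theorem eq_zero_of_neg_mem (hP : IsCone P) (hu : u ∈ P) (hu' : -u ∈ P) : u = 0 := by
  have hmem : u ∈ P ∩ -P := ⟨hu, hu'⟩
  rwa [hP.2.2.2.2] at hmem

theorem coneLe_refl (hP : IsCone P) (u : F) : ConeLe P u u := by
  simpa only [ConeLe, sub_self] using hP.zero_mem

theorem coneLe_trans (hP : IsCone P) (huv : ConeLe P u v) (hvw : ConeLe P v w) : ConeLe P u w := by
  simpa only [ConeLe, sub_add_sub_cancel] using hP.add_mem hvw huv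

theorem coneLe_antisymm (hP : IsCone P) (huv : ConeLe P u v) (hvu : ConeLe P v u) : u = v :=
  (sub_eq_zero.1 (hP.eq_zero_of_neg_mem huv (by rwa [neg_sub]))).symm

theorem add_coneLe_add (hP : IsCone P) (hab : ConeLe P a b) (huv : ConeLe P u v) :
    ConeLe P (a + u) (b + v) := by
  simpa only [ConeLe, add_sub_add_comm] using hP.add_mem hab huv

theorem smul_coneLe_smul (hP : IsCone P) {t : ℝ} (ht : 0 ≤ t) (huv : ConeLe P u v) :
    ConeLe P (t • u) (t • v) := by
  simpa only [ConeLe, smul_sub] using hP.smul_mem ht huv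

theorem smul_coneLe_smul_of_le (hP : IsCone P) {t t' : ℝ} (ht : t ≤ t') (he : e ∈ P) :
    ConeLe P (t • e) (t' • e) := by
  simpa only [ConeLe, sub_smul] using hP.smul_mem (sub_nonneg.2 ht) he

open scoped Pointwise in
theorem smul_mem_interior (hP : IsCone P) {t : ℝ} (ht : 0 < t) (hu : u ∈ interior P) :
    t • u ∈ interior P := by
  have hsub : t • P ⊆ P := smul_set_subset_iff.2 fun _ hv => hP.smul_mem ht.le hv
  exact interior_mono hsub (interior_smul₀ ht.ne' P ▸ smul_mem_smul_set hu)

open scoped Pointwise in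
theorem coneLt_of_coneLe_of_coneLt (hP : IsCone P) (huv : ConeLe P u v) (hvw : ConeLt P v w) :
    ConeLt P u w := by
  have hsub : P + P ⊆ P := add_subset_iff.2 fun _ hx _ hy => hP.add_mem hx hy
  have hmem := interior_mono hsub (subset_interior_add_left (add_mem_add hvw huv))
  rwa [sub_add_sub_cancel] at hmem

theorem eq_zero_of_forall_coneLt (hP : IsCone P) (hsolid : (interior P).Nonempty) (hv : v ∈ P)
    (hlt : ∀ c, ConeLt P 0 c → ConeLt P v c) : v = 0 := by
  obtain ⟨c, hc⟩ := hsolid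
  have hlim : Tendsto (fun n : ℕ => (1 / ((n : ℝ) + 1)) • c - v) atTop (nhds ((0 : ℝ) • c - v)) :=
    (tendsto_one_div_add_atTop_nhds_zero_nat.smul_const c).sub_const v
  have hmem (n : ℕ) : (1 / ((n : ℝ) + 1)) • c - v ∈ P := by
    refine interior_subset (hlt _ ?_)
    simpa only [ConeLt, sub_zero] using hP.smul_mem_interior Nat.one_div_pos_of_nat hc
  have hneg := hP.2.1.mem_of_tendsto hlim (.of_forall hmem)
  rw [zero_smul, zero_sub] at hneg
  exact hP.eq_zero_of_neg_mem hv hneg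

theorem exists_coneLe_natCast_smul (hP : IsCone P) (hb : b ∈ interior P) (u : F) :
    ∃ n : ℕ, ConeLe P u ((n : ℝ) • b) := by
  have hlim : Tendsto (fun n : ℕ => b - (1 / ((n : ℝ) + 1)) • u) atTop (nhds (b - (0 : ℝ) • u)) :=
    (tendsto_one_div_add_atTop_nhds_zero_nat.smul_const u).const_sub b
  rw [zero_smul, sub_zero] at hlim
  obtain ⟨n, hn⟩ := (hlim.eventually_mem (isOpen_interior.mem_nhds hb)).exists
  have hpos : (0 : ℝ) < n + 1 := by positivity
  refine ⟨n + 1, ?_⟩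
  have hmem := hP.smul_mem hpos.le (interior_subset hn)
  rw [smul_sub, smul_smul, mul_one_div_cancel hpos.ne', one_smul] at hmem
  exact_mod_cast hmem

end IsCone

/-- The nonnegative multiples of `e` that dominate `v` in the order of the cone `P`. -/
def dominatingScalars (P : Set F) (e v : F) : Set ℝ :=
  {t | 0 ≤ t ∧ ConeLe P v (t • e)}

/-- The gauge of `v` with respect to `e`: the least `t ≥ 0` with `v ≤ t • e`. It is meaningful
only if `dominatingScalars P e v` is nonempty; otherwise its value is `0`. -/
noncomputable def coneGauge (P : Set F) (e v : F) : ℝ :=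
  sInf (dominatingScalars P e v)

namespace IsCone

theorem isLeast_coneGauge (hP : IsCone P) (hv : (dominatingScalars P e v).Nonempty) :
    IsLeast (dominatingScalars P e v) (coneGauge P e v) := by
  have hclosed : IsClosed (dominatingScalars P e v) :=
    isClosed_Ici.inter (hP.2.1.preimage (f := fun t : ℝ => t • e - v) (by fun_prop))
  exact hclosed.isLeast_csInf hv ⟨0, fun _ ht => ht.1⟩

theorem coneGauge_eq_zero_iff (hP : IsCone P) (hv : v ∈ P)
    (hdom : (dominatingScalars P e v).Nonempty) : coneGauge P e v = 0 ↔ v = 0 := by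
  have hleast := hP.isLeast_coneGauge hdom
  refine ⟨fun h => ?_, ?_⟩
  · have hle := hleast.1.2
    rw [h, zero_smul, ConeLe, zero_sub] at hle
    exact hP.eq_zero_of_neg_mem hv hle
  · rintro rfl
    exact le_antisymm (hleast.2 ⟨le_rfl, by simpa only [zero_smul] using hP.coneLe_refl 0⟩)
      hleast.1.1

theorem coneLe_of_coneGauge_le_one (hP : IsCone P) (he : e ∈ P)
    (hdom : (dominatingScalars P e v).Nonempty) (hle : coneGauge P e v ≤ 1) : ConeLe P v e := by
  have h := hP.coneLe_trans (hP.isLeast_coneGauge hdom).1.2 (hP.smul_coneLe_smul_of_le hle he)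
  rwa [one_smul] at h

end IsCone

/-- A subadditive self-map of the cone `P` fixing `0` and embedding the order of `P`. As for
`IsWeakDistanceAltering`, the map is given on the whole space. -/
structure IsSubadditiveEmbedding (P : Set F) (φ : F → F) : Prop where
  map_zero : φ 0 = 0
  map_add_coneLe : ∀ u ∈ P, ∀ v ∈ P, ConeLe P (φ (u + v)) (φ u + φ v)
  map_coneLe_map_iff : ∀ u ∈ P, ∀ v ∈ P, (ConeLe P (φ u) (φ v) ↔ ConeLe P u v)

theorem IsWeakDistanceAltering.isSubadditiveEmbedding {φ : F → F} (hφ : IsWeakDistanceAltering P φ)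
    (hP : IsCone P) (hsolid : (interior P).Nonempty) : IsSubadditiveEmbedding P φ := by
  obtain ⟨hmem, hadd, hle, -, hlim⟩ := hφ
  refine ⟨hP.eq_zero_of_forall_coneLt hsolid (hmem 0 hP.zero_mem) fun c hc => ?_, hadd, hle⟩
  obtain ⟨M, hM⟩ := hlim (fun _ => 0) (fun _ => hP.zero_mem) (fun _ hc => ⟨0, fun _ _ => hc⟩) c hc
  exact hM M le_rfl

namespace IsSubadditiveEmbedding

variable {φ : F → F}

theorem map_mem (hφ : IsSubadditiveEmbedding P φ) (hP : IsCone P) (hu : u ∈ P) : φ u ∈ P := by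
  have h := (hφ.map_coneLe_map_iff 0 hP.zero_mem u hu).2 (by rwa [ConeLe, sub_zero])
  rwa [ConeLe, hφ.map_zero, sub_zero] at h

theorem map_eq_zero_iff (hφ : IsSubadditiveEmbedding P φ) (hP : IsCone P) (hu : u ∈ P) :
    φ u = 0 ↔ u = 0 := by
  refine ⟨fun h => ?_, fun h => h ▸ hφ.map_zero⟩
  have heq : φ u = φ 0 := h.trans hφ.map_zero.symm
  exact hP.coneLe_antisymm
    ((hφ.map_coneLe_map_iff u hu 0 hP.zero_mem).1 (heq ▸ hP.coneLe_refl _))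
    ((hφ.map_coneLe_map_iff 0 hP.zero_mem u hu).1 (heq ▸ hP.coneLe_refl _))

theorem map_natCast_smul_coneLe (hφ : IsSubadditiveEmbedding P φ) (hP : IsCone P) (hu : u ∈ P)
    (n : ℕ) : ConeLe P (φ ((n : ℝ) • u)) ((n : ℝ) • φ u) := by
  induction n with
  | zero => simpa only [Nat.cast_zero, zero_smul, hφ.map_zero] using hP.coneLe_refl 0
  | succ n ih =>
    simp only [Nat.cast_succ, add_smul, one_smul]
    exact hP.coneLe_trans (hφ.map_add_coneLe _ (hP.smul_mem n.cast_nonneg hu) u hu)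
      (hP.add_coneLe_add ih (hP.coneLe_refl _))

theorem dominatingScalars_nonempty (hφ : IsSubadditiveEmbedding P φ) (hP : IsCone P)
    (hb : b ∈ interior P) (hu : u ∈ P) : (dominatingScalars P (φ b) (φ u)).Nonempty := by
  obtain ⟨n, hn⟩ := hP.exists_coneLe_natCast_smul hb u
  have hbP : b ∈ P := interior_subset hb
  have hmap := (hφ.map_coneLe_map_iff u hu _ (hP.smul_mem n.cast_nonneg hbP)).2 hn
  exact ⟨n, n.cast_nonneg, hP.coneLe_trans hmap (hφ.map_natCast_smul_coneLe hP hbP n)⟩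

end IsSubadditiveEmbedding

end Cone

section Scalarization

variable {F : Type*} [NormedAddCommGroup F] [NormedSpace ℝ F] {P : Set F} {e : F}
  {X : Type*} {d ρ : X → X → F} {s : ℕ} {T : X → X} {μ α β γ : ℝ}

theorem IsGCRMetric.map (hd : IsGCRMetric P d s) (hP : IsCone P) {φ : F → F}
    (hφ : IsSubadditiveEmbedding P φ) : IsGCRMetric P (fun x y => φ (d x y)) s := by
  obtain ⟨hmem, hzero, hrect⟩ := hd
  refine ⟨fun x y => hφ.map_mem hP (hmem x y),
    fun x y => (hφ.map_eq_zero_iff hP (hmem x y)).trans (hzero x y), ?_⟩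
  intro x y u v huv hux huy hvx hvy
  have hs : (s : ℝ) • d u v ∈ P := hP.smul_mem s.cast_nonneg (hmem u v)
  have hsum : d x u + (s : ℝ) • d u v ∈ P := hP.add_mem (hmem x u) hs
  have hmono := (hφ.map_coneLe_map_iff _ (hmem x y) _ (hP.add_mem hsum (hmem v y))).2
    (hrect x y u v huv hux huy hvx hvy)
  have hsplit : ConeLe P (φ (d x u + (s : ℝ) • d u v)) (φ (d x u) + (s : ℝ) • φ (d u v)) :=
    hP.coneLe_trans (hφ.map_add_coneLe _ (hmem x u) _ hs)
      (hP.add_coneLe_add (hP.coneLe_refl _) (hφ.map_natCast_smul_coneLe hP (hmem u v) s))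
  exact hP.coneLe_trans hmono (hP.coneLe_trans (hφ.map_add_coneLe _ hsum _ (hmem v y))
    (hP.add_coneLe_add hsplit (hP.coneLe_refl _)))

theorem coneLe_Ici_iff {a b : ℝ} : ConeLe (Ici 0) a b ↔ a ≤ b := by
  rw [ConeLe, mem_Ici, sub_nonneg]

theorem coneLt_Ici_iff {a b : ℝ} : ConeLt (Ici 0) a b ↔ a < b := by
  rw [ConeLt, interior_Ici, mem_Ioi, sub_pos]

theorem IsGCRMetric.coneGauge (hρ : IsGCRMetric P ρ s) (hP : IsCone P)
    (hdom : ∀ x y, (dominatingScalars P e (ρ x y)).Nonempty) :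
    IsGCRMetric (Ici 0) (fun x y => coneGauge P e (ρ x y)) s := by
  obtain ⟨hmem, hzero, hrect⟩ := hρ
  have hleast x y := hP.isLeast_coneGauge (hdom x y)
  refine ⟨fun x y => (hleast x y).1.1,
    fun x y => (hP.coneGauge_eq_zero_iff (hmem x y) (hdom x y)).trans (hzero x y), ?_⟩
  intro x y u v huv hux huy hvx hvy
  obtain ⟨⟨hxu0, hxu⟩, -⟩ := hleast x u
  obtain ⟨⟨huv0, huv'⟩, -⟩ := hleast u v
  obtain ⟨⟨hvy0, hvy'⟩, -⟩ := hleast v y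
  refine coneLe_Ici_iff.2 ((hleast x y).2 ⟨by positivity, ?_⟩)
  simp only [add_smul, smul_assoc]
  exact hP.coneLe_trans (hrect x y u v huv hux huy hvx hvy)
    (hP.add_coneLe_add (hP.add_coneLe_add hxu (hP.smul_coneLe_smul s.cast_nonneg huv')) hvy')

/-- `T` is a contraction of Hardy–Rogers type for the cone-valued `ρ`, without the term
`ρ x (T y)`. The bounds on the coefficients are part of the notion. -/
structure IsHardyRogersContraction (P : Set F) (ρ : X → X → F) (T : X → X) (μ α β γ : ℝ) :
    Prop where
  nonneg_μ : 0 ≤ μ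
  nonneg_α : 0 ≤ α
  nonneg_β : 0 ≤ β
  nonneg_γ : 0 ≤ γ
  sum_lt_one : μ + α + β < 1
  add_lt_one : μ + γ < 1
  coneLe : ∀ x y, ConeLe P (ρ (T x) (T y))
    (μ • ρ x y + α • ρ x (T x) + β • ρ y (T y) + γ • ρ y (T x))

theorem IsHardyRogersContraction.coneGauge (hT : IsHardyRogersContraction P ρ T μ α β γ)
    (hP : IsCone P) (hdom : ∀ x y, (dominatingScalars P e (ρ x y)).Nonempty) :
    IsHardyRogersContraction (Ici 0) (fun x y => coneGauge P e (ρ x y)) T μ α β γ := by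
  obtain ⟨hμ, hα, hβ, hγ, hsum, hadd, hle⟩ := hT
  refine ⟨hμ, hα, hβ, hγ, hsum, hadd, fun x y => ?_⟩
  have hleast x y := hP.isLeast_coneGauge (hdom x y)
  obtain ⟨⟨hxy0, hxy⟩, -⟩ := hleast x y
  obtain ⟨⟨hx0, hx⟩, -⟩ := hleast x (T x)
  obtain ⟨⟨hy0, hy⟩, -⟩ := hleast y (T y)
  obtain ⟨⟨hyx0, hyx⟩, -⟩ := hleast y (T x)
  refine coneLe_Ici_iff.2 ((hleast (T x) (T y)).2 ⟨by positivity, ?_⟩)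
  simp only [add_smul, smul_assoc]
  exact hP.coneLe_trans (hle x y) (hP.add_coneLe_add (hP.add_coneLe_add (hP.add_coneLe_add
    (hP.smul_coneLe_smul hμ hxy) (hP.smul_coneLe_smul hα hx)) (hP.smul_coneLe_smul hβ hy))
    (hP.smul_coneLe_smul hγ hyx))

end Scalarization

section Real

variable {X : Type*} {D : X → X → ℝ} {s : ℕ} {T : X → X} {μ α β γ r K : ℝ}

theorem isGCRMetric_Ici_iff : IsGCRMetric (Ici 0) D s ↔
    (∀ x y, 0 ≤ D x y) ∧ (∀ x y, D x y = 0 ↔ x = y) ∧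
      ∀ x y u v, u ≠ v → u ≠ x → u ≠ y → v ≠ x → v ≠ y → D x y ≤ D x u + s * D u v + D v y := by
  simp only [IsGCRMetric, coneLe_Ici_iff, mem_Ici, smul_eq_mul]

/-- The potential of the pair `(y, z)` under `T`: the weight `K` on the displacements
`D y (T y)` and `D z (T z)` is chosen large enough to make it decrease along `T`. -/
def orbitPotential (D : X → X → ℝ) (T : X → X) (K : ℝ) (y z : X) : ℝ :=
  max (D y z) (D z (T y)) + K * max (D y (T y)) (D z (T z))

theorem max_le_orbitPotential (hD : ∀ x y, 0 ≤ D x y) (hK : 0 ≤ K) (y z : X) :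
    max (D y z) (D z (T y)) ≤ orbitPotential D T K y z :=
  le_add_of_nonneg_right (mul_nonneg hK (le_max_of_le_left (hD _ _)))

theorem orbitPotential_nonneg (hD : ∀ x y, 0 ≤ D x y) (hK : 0 ≤ K) (y z : X) :
    0 ≤ orbitPotential D T K y z :=
  (le_max_of_le_left (hD y z)).trans (max_le_orbitPotential hD hK y z)

theorem orbitPotential_iterate_le (hr : 0 ≤ r)
    (hcontr : ∀ y z, orbitPotential D T K (T y) (T z) ≤ r * orbitPotential D T K y z)
    (n : ℕ) (y z : X) :
    orbitPotential D T K (T^[n] y) (T^[n] z) ≤ r ^ n * orbitPotential D T K y z := by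
  induction n with
  | zero => simp only [Function.iterate_zero, id_eq, pow_zero, one_mul, le_refl]
  | succ n ih =>
    rw [Function.iterate_succ_apply', Function.iterate_succ_apply', pow_succ', mul_assoc]
    exact (hcontr _ _).trans (by gcongr)

theorem max_iterate_add_le (hD : ∀ x y, 0 ≤ D x y) (hK : 0 ≤ K) (hr : 0 ≤ r)
    (hcontr : ∀ y z, orbitPotential D T K (T y) (T z) ≤ r * orbitPotential D T K y z)
    (n k : ℕ) (x : X) :
    max (D (T^[n + k] x) (T^[n] x)) (D (T^[n] x) (T^[n + (k + 1)] x)) ≤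
      r ^ n * orbitPotential D T K (T^[k] x) x := by
  rw [← add_assoc, Function.iterate_succ_apply', Function.iterate_add_apply]
  exact (max_le_orbitPotential hD hK _ _).trans (orbitPotential_iterate_le hr hcontr n _ x)

namespace IsHardyRogersContraction

theorem map_le (hT : IsHardyRogersContraction (Ici 0) D T μ α β γ) (x y : X) :
    D (T x) (T y) ≤ μ * D x y + α * D x (T x) + β * D y (T y) + γ * D y (T x) :=
  coneLe_Ici_iff.1 (hT.coneLe x y)

theorem exists_displacement_le (hT : IsHardyRogersContraction (Ici 0) D T μ α β γ)
    (hDself : ∀ x, D x x = 0) :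
    ∃ q : ℝ, 0 ≤ q ∧ q < 1 ∧ ∀ x, D (T x) (T (T x)) ≤ q * D x (T x) := by
  have ⟨hμ, hα, _, _, hsum, _, _⟩ := hT
  have hβ1 : 0 < 1 - β := by linarith
  refine ⟨(μ + α) / (1 - β), by positivity, by rw [div_lt_one hβ1]; linarith, fun x => ?_⟩
  have h := hT.map_le x (T x)
  rw [hDself] at h
  rw [div_mul_eq_mul_div, le_div_iff₀ hβ1]
  linarith

theorem max_map_le (hT : IsHardyRogersContraction (Ici 0) D T μ α β γ) (hD : ∀ x y, 0 ≤ D x y)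
    (hstep : ∀ x, D (T x) (T (T x)) ≤ D x (T x)) (y z : X) :
    max (D (T y) (T z)) (D (T z) (T (T y))) ≤
      (μ + γ) * max (D y z) (D z (T y)) + 2 * max (D y (T y)) (D z (T z)) := by
  have ⟨hμ, hα, hβ, hγ, hsum, hμγ, _⟩ := hT
  set S := max (D y z) (D z (T y))
  set m := max (D y (T y)) (D z (T z))
  have hyz : D y z ≤ S := le_max_left _ _
  have hzy : D z (T y) ≤ S := le_max_right _ _
  have hy : D y (T y) ≤ m := le_max_left _ _
  have hz : D z (T z) ≤ m := le_max_right _ _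
  have hy' : D (T y) (T (T y)) ≤ m := (hstep y).trans hy
  have hS0 : 0 ≤ S := (hD y z).trans hyz
  have hm0 : 0 ≤ m := (hD y (T y)).trans hy
  have hαβ : (α + β) * m ≤ m := mul_le_of_le_one_left hm0 (by linarith)
  have hfirst : D (T y) (T z) ≤ (μ + γ) * S + m :=
    calc D (T y) (T z) ≤ μ * D y z + α * D y (T y) + β * D z (T z) + γ * D z (T y) := hT.map_le y z
      _ ≤ μ * S + α * m + β * m + γ * S := by gcongr
      _ ≤ (μ + γ) * S + m := by linarith
  have hfirst' : D (T y) (T z) ≤ S + m :=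
    hfirst.trans (by gcongr; exact mul_le_of_le_one_left hS0 hμγ.le)
  have hγm : γ * m ≤ m := mul_le_of_le_one_left hm0 (by linarith)
  refine max_le (by linarith) ?_
  calc D (T z) (T (T y))
      ≤ μ * D z (T y) + α * D z (T z) + β * D (T y) (T (T y)) + γ * D (T y) (T z) :=
        hT.map_le z (T y)
    _ ≤ μ * S + α * m + β * m + γ * (S + m) := by gcongr
    _ ≤ (μ + γ) * S + 2 * m := by linarith

theorem exists_orbitPotential_le (hT : IsHardyRogersContraction (Ici 0) D T μ α β γ)
    (hD : ∀ x y, 0 ≤ D x y) (hDself : ∀ x, D x x = 0) :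
    ∃ r K : ℝ, 0 ≤ r ∧ r < 1 ∧ 0 ≤ K ∧
      ∀ y z, orbitPotential D T K (T y) (T z) ≤ r * orbitPotential D T K y z := by
  obtain ⟨q, hq0, hq1, hq⟩ := hT.exists_displacement_le hDself
  obtain ⟨r, hlt, hr1⟩ := exists_between (max_lt hT.add_lt_one hq1)
  obtain ⟨hμγr, hqr⟩ := max_lt_iff.1 hlt
  have hrq : 0 < r - q := sub_pos.2 hqr
  obtain ⟨K, hK0, hK⟩ : ∃ K : ℝ, 0 ≤ K ∧ 2 + K * q = r * K :=
    ⟨2 / (r - q), div_nonneg zero_le_two hrq.le, by field_simp [hrq.ne']; ring⟩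
  refine ⟨r, K, hq0.trans hqr.le, hr1, hK0, fun y z => ?_⟩
  have hstep x : D (T x) (T (T x)) ≤ D x (T x) :=
    (hq x).trans (mul_le_of_le_one_left (hD _ _) hq1.le)
  have hS0 : 0 ≤ max (D y z) (D z (T y)) := le_max_of_le_left (hD _ _)
  have hdisp : max (D (T y) (T (T y))) (D (T z) (T (T z))) ≤
      q * max (D y (T y)) (D z (T z)) := by
    rw [mul_max_of_nonneg _ _ hq0]
    exact max_le_max (hq y) (hq z)
  unfold orbitPotential
  calc _ ≤ ((μ + γ) * max (D y z) (D z (T y)) + 2 * max (D y (T y)) (D z (T z))) +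
        K * (q * max (D y (T y)) (D z (T z))) := by
        gcongr
        exact hT.max_map_le hD hstep y z
    _ = (μ + γ) * max (D y z) (D z (T y)) + (2 + K * q) * max (D y (T y)) (D z (T z)) := by ring
    _ ≤ r * max (D y z) (D z (T y)) + r * K * max (D y (T y)) (D z (T z)) := by
        rw [hK]
        gcongr
    _ = r * (max (D y z) (D z (T y)) + K * max (D y (T y)) (D z (T z))) := by ring

end IsHardyRogersContraction

namespace IsGCRMetric

theorem isFixedPt_of_isPeriodicPt (hD : IsGCRMetric (Ici 0) D s) (hK : 0 ≤ K) (hr : 0 ≤ r)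
    (hr1 : r < 1)
    (hcontr : ∀ y z, orbitPotential D T K (T y) (T z) ≤ r * orbitPotential D T K y z)
    {k : ℕ} (hk : k ≠ 0) {y : X} (hy : Function.IsPeriodicPt T k y) : Function.IsFixedPt T y := by
  obtain ⟨hnonneg, hzero, -⟩ := isGCRMetric_Ici_iff.1 hD
  have hle := orbitPotential_iterate_le hr hcontr k y y
  rw [hy.eq] at hle
  have hpot : orbitPotential D T K y y ≤ 0 := by
    by_contra! hpos
    exact hle.not_gt (mul_lt_of_lt_one_left hpos (pow_lt_one₀ hr hr1 hk))
  have hdist : D y (T y) ≤ 0 :=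
    (le_max_right _ _).trans ((max_le_orbitPotential hnonneg hK y y).trans hpot)
  exact ((hzero y (T y)).1 (le_antisymm hdist (hnonneg _ _))).symm

theorem le_add_shift_of_injective (hD : IsGCRMetric (Ici 0) D s) {x : ℕ → X}
    (hx : Function.Injective x) {m : ℕ} (hm : m ≠ 0) {A B : ℝ}
    (hA : ∀ i, D (x i) (x (m + i)) ≤ A) (hB : ∀ i, D (x (m + i)) (x i) ≤ B) (i j : ℕ) :
    D (x i) (x j) ≤ A + s * D (x (m + i)) (x (m + j)) + B := by
  obtain ⟨hnonneg, hzero, hrect⟩ := isGCRMetric_Ici_iff.1 hD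
  have hA0 : 0 ≤ A := (hnonneg _ _).trans (hA 0)
  have hB0 : 0 ≤ B := (hnonneg _ _).trans (hB 0)
  have hs0 : 0 ≤ s * D (x (m + i)) (x (m + j)) := mul_nonneg s.cast_nonneg (hnonneg _ _)
  by_cases hij : i = j
  · rw [hij] at hs0 ⊢
    linarith [(hzero (x j) (x j)).2 rfl]
  by_cases hji : j = m + i
  · linarith [hji ▸ hA i]
  by_cases hij' : i = m + j
  · linarith [hij' ▸ hB j]
  have hle := hrect (x i) (x j) (x (m + i)) (x (m + j)) (hx.ne (by lia)) (hx.ne (by lia))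
    (hx.ne (by lia)) (hx.ne (by lia)) (hx.ne (by lia))
  linarith [hA i, hB j]

theorem orbitPotential_iterate_le_of_injective (hD : IsGCRMetric (Ici 0) D s) (hK : 0 ≤ K)
    (hr : 0 ≤ r) (hr1 : r ≤ 1)
    (hcontr : ∀ y z, orbitPotential D T K (T y) (T z) ≤ r * orbitPotential D T K y z)
    {x : X} (hx : Function.Injective fun n => T^[n] x) {m : ℕ} (hm : s * r ^ (m + 1) ≤ 1 / 2)
    (k : ℕ) :
    orbitPotential D T K (T^[k] x) x ≤ 2 * (orbitPotential D T K (T^[m] x) x +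
      orbitPotential D T K (T^[m + 1] x) x + K * orbitPotential D T K x x) := by
  have hnonneg := (isGCRMetric_Ici_iff.1 hD).1
  have hmax := max_iterate_add_le hnonneg hK hr hcontr
  let L : ℕ → ℝ := fun j => orbitPotential D T K (T^[j] x) x
  have hL0 (j : ℕ) : 0 ≤ L j := orbitPotential_nonneg hnonneg hK _ _
  have hself (n j : ℕ) : max (D (T^[n + j] x) (T^[n] x)) (D (T^[n] x) (T^[n + (j + 1)] x)) ≤ L j :=
    (hmax n j x).trans (mul_le_of_le_one_left (hL0 j) (pow_le_one₀ hr hr1))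
  have hfwd (i : ℕ) : D (T^[i] x) (T^[m + 1 + i] x) ≤ L m :=
    add_comm i (m + 1) ▸ (le_max_right _ _).trans (hself i m)
  have hbwd (i : ℕ) : D (T^[m + 1 + i] x) (T^[i] x) ≤ L (m + 1) :=
    add_comm i (m + 1) ▸ (le_max_left _ _).trans (hself i (m + 1))
  have hshift := hD.le_add_shift_of_injective hx m.succ_ne_zero hfwd hbwd
  have hshifted : s * max (D (T^[m + 1 + k] x) (T^[m + 1] x))
      (D (T^[m + 1] x) (T^[m + 1 + (k + 1)] x)) ≤ 1 / 2 * L k :=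
    calc _ ≤ s * (r ^ (m + 1) * L k) := by gcongr; exact hmax (m + 1) k x
      _ = s * r ^ (m + 1) * L k := by ring
      _ ≤ 1 / 2 * L k := mul_le_mul_of_nonneg_right hm (hL0 k)
  rw [mul_max_of_nonneg _ _ s.cast_nonneg, max_le_iff] at hshifted
  have hcross : max (D (T^[k] x) x) (D x (T^[k + 1] x)) ≤ L m + 1 / 2 * L k + L (m + 1) :=
    max_le ((hshift k 0).trans (add_le_add (add_le_add le_rfl hshifted.1) le_rfl))
      ((hshift 0 (k + 1)).trans (add_le_add (add_le_add le_rfl hshifted.2) le_rfl))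
  have hdisp (j : ℕ) : D (T^[j] x) (T^[j + 1] x) ≤ L 0 := (le_max_right _ _).trans (hself j 0)
  have hpot : L k ≤ L m + 1 / 2 * L k + L (m + 1) + K * L 0 := by
    simp only [Function.iterate_succ_apply'] at hcross hdisp
    exact add_le_add hcross (mul_le_mul_of_nonneg_left (max_le (hdisp k) (hdisp 0)) hK)
  change L k ≤ 2 * (L m + L (m + 1) + K * L 0)
  linarith

theorem isConeCauchy_iterate_of_injective (hD : IsGCRMetric (Ici 0) D s) (hK : 0 ≤ K) (hr : 0 ≤ r)
    (hr1 : r < 1)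
    (hcontr : ∀ y z, orbitPotential D T K (T y) (T z) ≤ r * orbitPotential D T K y z)
    {x : X} (hx : Function.Injective fun n => T^[n] x) :
    IsConeCauchy (Ici 0) D fun n => T^[n] x := by
  have hpow := tendsto_pow_atTop_nhds_zero_of_lt_one hr hr1
  obtain ⟨m, hm⟩ : ∃ m : ℕ, s * r ^ (m + 1) ≤ 1 / 2 := by
    have hlim := (hpow.comp (tendsto_add_atTop_nat 1)).const_mul (s : ℝ)
    rw [mul_zero] at hlim
    exact (hlim.eventually_le_const (by norm_num)).exists
  obtain ⟨B, hB⟩ : ∃ B, ∀ k, orbitPotential D T K (T^[k] x) x ≤ B :=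
    ⟨_, hD.orbitPotential_iterate_le_of_injective hK hr hr1.le hcontr hx hm⟩
  have hlim := hpow.mul_const B
  rw [zero_mul] at hlim
  intro c hc
  obtain ⟨N, hN⟩ := eventually_atTop.1 (hlim.eventually_lt_const (coneLt_Ici_iff.1 hc))
  refine ⟨N, fun n hn k hk => coneLt_Ici_iff.2 ?_⟩
  obtain ⟨j, rfl⟩ := Nat.exists_eq_add_of_le' hk
  calc D (T^[n] x) (T^[n + (j + 1)] x) ≤ r ^ n * orbitPotential D T K (T^[j] x) x :=
        (le_max_right _ _).trans
          (max_iterate_add_le (isGCRMetric_Ici_iff.1 hD).1 hK hr hcontr n j x)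
    _ ≤ r ^ n * B := by gcongr; exact hB j
    _ < c := hN n hn

theorem isConeCauchy_iterate_of_isFixedPt (hD : IsGCRMetric (Ici 0) D s) {x : X} {i : ℕ}
    (hfix : Function.IsFixedPt T (T^[i] x)) : IsConeCauchy (Ici 0) D fun n => T^[n] x := by
  have hconst (n : ℕ) (hn : i ≤ n) : T^[n] x = T^[i] x := by
    rw [← Nat.sub_add_cancel hn, Function.iterate_add_apply]
    exact hfix.iterate (n - i)
  refine fun c hc => ⟨i, fun n hn k _ => ?_⟩
  simpa only [hconst n hn, hconst (n + k) (le_add_right hn), (hD.2.1 _ _).2 rfl] using hc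

end IsGCRMetric

theorem IsHardyRogersContraction.isConeCauchy_iterate_real
    (hT : IsHardyRogersContraction (Ici 0) D T μ α β γ) (hD : IsGCRMetric (Ici 0) D s) (x : X) :
    IsConeCauchy (Ici 0) D fun n => T^[n] x := by
  obtain ⟨hnonneg, hzero, -⟩ := isGCRMetric_Ici_iff.1 hD
  obtain ⟨r, K, hr, hr1, hK, hcontr⟩ :=
    hT.exists_orbitPotential_le hnonneg fun y => (hzero y y).2 rfl
  by_cases hx : Function.Injective fun n => T^[n] x
  · exact hD.isConeCauchy_iterate_of_injective hK hr hr1 hcontr hx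
  obtain ⟨i, j, hij, heq⟩ : ∃ i j, i < j ∧ T^[i] x = T^[j] x := by
    contrapose! hx
    exact .of_lt_imp_ne hx
  have hper : Function.IsPeriodicPt T (j - i) (T^[i] x) := by
    rw [Function.IsPeriodicPt, Function.IsFixedPt, ← Function.iterate_add_apply,
      Nat.sub_add_cancel hij.le, heq]
  exact hD.isConeCauchy_iterate_of_isFixedPt
    (hD.isFixedPt_of_isPeriodicPt hK hr hr1 hcontr (Nat.sub_ne_zero_of_lt hij) hper)

end Real

theorem iterates_cauchy_general {F : Type*} [NormedAddCommGroup F] [NormedSpace ℝ F] {P : Set F}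
    (hP : IsCone P) {X : Type*} {d : X → X → F} {s : ℕ} (hd : IsGCRMetric P d s) {T : X → X}
    {φ : F → F} (hφ : IsSubadditiveEmbedding P φ) {μ α β γ : ℝ}
    (hT : IsHardyRogersContraction P (fun x y => φ (d x y)) T μ α β γ) (x : X) :
    IsConeCauchy P d fun n => T^[n] x := by
  intro c hc
  rw [ConeLt, sub_zero] at hc
  obtain ⟨b, hb, hbc⟩ : ∃ b ∈ interior P, ConeLt P b c := by
    have hhalf : (2⁻¹ : ℝ) • c ∈ interior P := hP.smul_mem_interior (by norm_num) hc
    refine ⟨(2⁻¹ : ℝ) • c, hhalf, ?_⟩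
    rwa [ConeLt, sub_eq_of_eq_add (by module : c = (2⁻¹ : ℝ) • c + (2⁻¹ : ℝ) • c)]
  have hbP : b ∈ P := interior_subset hb
  have hdom x y : (dominatingScalars P (φ b) (φ (d x y))).Nonempty :=
    hφ.dominatingScalars_nonempty hP hb (hd.1 x y)
  obtain ⟨N, hN⟩ := (hT.coneGauge hP hdom).isConeCauchy_iterate_real
    ((hd.map hP hφ).coneGauge hP hdom) x 1 (coneLt_Ici_iff.2 one_pos)
  refine ⟨N, fun n hn k hk => hP.coneLt_of_coneLe_of_coneLt ?_ hbc⟩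
  have hle := hP.coneLe_of_coneGauge_le_one (hφ.map_mem hP hbP) (hdom _ _)
    (coneLt_Ici_iff.1 (hN n hn k hk)).le
  exact (hφ.map_coneLe_map_iff _ (hd.1 _ _) b hbP).1 hle

theorem iterates_cauchy {X : Type*}
    (P : Set E) (hP : IsCone P) (hsolid : (interior P).Nonempty)
    (d : X → X → E) (s : ℕ) (hs : 1 ≤ s) (hd : IsGCRMetric P d s)
    (T : X → X) (φ : E → E) (hφ : IsWeakDistanceAltering P φ)
    (μ α β γ : ℝ) (hμ : 0 ≤ μ) (hα : 0 ≤ α) (hβ : 0 ≤ β) (hγ : 0 ≤ γ)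
    (hsum : μ + α + β < 1) (hμs : μ < 1 / (s : ℝ)) (hμγ : μ + γ < 1)
    (hcontr : ∀ x y : X, ConeLe P (φ (d (T x) (T y)))
      (μ • φ (d x y) + α • φ (d x (T x)) + β • φ (d y (T y)) + γ • φ (d y (T x)))) :
    ∀ x : X, IsConeCauchy P d (fun n => T^[n] x) :=
  iterates_cauchy_general hP hd (hφ.isSubadditiveEmbedding hP hsolid)
    ⟨hμ, hα, hβ, hγ, hsum, hμγ, hcontr⟩
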